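/- Vanishing of the hydrodynamic projection of v·∇ₓ f₁ under incompressibility and the Boussinesq relation: let ρ, θ : U → ℝ and u : U → ℝ³ be differentiable at x ∈ U ⊂ ℝ³ with (∇·u)(x) = 0 and ∇(ρ + θ)(x) = 0, and let f₁(x,v) = (ρ(x) + u(x)·v + θ(x)(|v|²−3)/2) √μ(v). Then ∫_{ℝ³} (v·∇ₓ f₁)(x,v) φ(v) √μ(v) dv = 0 for every φ in {1, v₁, v₂, v₃, |v|²/2}. -/

import Mathlib

open MeasureTheory Real
open scoped RealInnerProductSpace

noncomputable section

/-- The global Maxwellian `μ(v) = (2π)^{−3/2} e^{−|v|²/2}`. -/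
def globalMaxwellian (v : EuclideanSpace ℝ (Fin 3)) : ℝ :=
  (2 * Real.pi) ^ (-(3 : ℝ) / 2) * Real.exp (-‖v‖ ^ 2 / 2)

/-- The first-order Hilbert correction
`f₁(x,v) = (ρ(x) + u(x)·v + θ(x)(|v|²−3)/2) √μ(v)`. -/
def hilbertFirst (ρ θ : EuclideanSpace ℝ (Fin 3) → ℝ)
    (u : EuclideanSpace ℝ (Fin 3) → EuclideanSpace ℝ (Fin 3))
    (x v : EuclideanSpace ℝ (Fin 3)) : ℝ :=
  (ρ x + ⟪u x, v⟫ + θ x * (‖v‖ ^ 2 - 3) / 2) * Real.sqrt (globalMaxwellian v)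

/-- One-dimensional Gaussian moments. -/
def gMom (n : ℕ) : ℝ := ∫ y : ℝ, y ^ n * Real.exp (-y ^ 2 / 2)

lemma gMom_integrable (n : ℕ) : Integrable (fun y : ℝ => y ^ n * Real.exp (-y ^ 2 / 2)) := by
  have h := integrable_rpow_mul_exp_neg_mul_sq (b := 1 / 2) (by norm_num) (s := (n : ℝ))
    (by have : (0 : ℝ) ≤ n := n.cast_nonneg
        linarith)
  refine h.congr (Filter.Eventually.of_forall fun y => ?_)
  simp only [Real.rpow_natCast]
  congr 2
  ring

lemma exp_hasDerivAt (y : ℝ) : HasDerivAt (fun y : ℝ => Real.exp (-y ^ 2 / 2))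
    (-(y * Real.exp (-y ^ 2 / 2))) y := by
  have h1 : HasDerivAt (fun y : ℝ => -y ^ 2 / 2) (-y) y := by
    have := ((hasDerivAt_pow 2 y).neg.div_const 2)
    refine this.congr_deriv ?_
    push_cast
    ring
  convert h1.exp using 1
  ring

lemma gMom_one : gMom 1 = 0 := by
  have h := integral_eq_zero_of_hasDerivAt_of_integrable exp_hasDerivAt
    ((gMom_integrable 1).neg.congr (Filter.Eventually.of_forall fun y => by simp))
    ((gMom_integrable 0).congr (Filter.Eventually.of_forall fun y => by simp))
  rw [integral_neg, neg_eq_zero] at h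
  simpa [gMom] using h

lemma gMom_add_two (n : ℕ) : gMom (n + 2) = (n + 1) * gMom n := by
  have hd : ∀ y : ℝ, HasDerivAt (fun y : ℝ => y ^ (n + 1) * Real.exp (-y ^ 2 / 2))
      ((n + 1) * (y ^ n * Real.exp (-y ^ 2 / 2)) - y ^ (n + 2) * Real.exp (-y ^ 2 / 2)) y := by
    intro y
    have := (hasDerivAt_pow (n + 1) y).mul (exp_hasDerivAt y)
    refine this.congr_deriv ?_
    push_cast
    ring
  have h := integral_eq_zero_of_hasDerivAt_of_integrable hd
    (((gMom_integrable n).const_mul _).sub (gMom_integrable (n + 2))) (gMom_integrable (n + 1))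
  rw [integral_sub ((gMom_integrable n).const_mul _) (gMom_integrable (n + 2)),
    integral_const_mul] at h
  unfold gMom
  linarith

abbrev E3 := EuclideanSpace ℝ (Fin 3)

/-- `f` has Gaussian integral `c`. -/
def Mom (f : E3 → ℝ) (c : ℝ) : Prop :=
  Integrable (fun v : E3 => f v * Real.exp (-‖v‖ ^ 2 / 2)) ∧
    ∫ v : E3, f v * Real.exp (-‖v‖ ^ 2 / 2) = c

lemma Mom.add {f g : E3 → ℝ} {c d : ℝ} (hf : Mom f c) (hg : Mom g d) :
    Mom (fun v => f v + g v) (c + d) := by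
  unfold Mom
  simp only [add_mul]
  exact ⟨hf.1.add hg.1, by rw [integral_add hf.1 hg.1, hf.2, hg.2]⟩

lemma Mom.smul {f : E3 → ℝ} {c : ℝ} (a : ℝ) (hf : Mom f c) :
    Mom (fun v => a * f v) (a * c) := by
  unfold Mom
  simp only [mul_assoc]
  exact ⟨hf.1.const_mul a, by rw [integral_const_mul, hf.2]⟩

lemma Mom.sum {f : Fin 3 → E3 → ℝ} {c : Fin 3 → ℝ} (hf : ∀ i, Mom (f i) (c i)) :
    Mom (fun v => ∑ i, f i v) (∑ i, c i) := by
  simp only [Fin.sum_univ_three]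
  exact ((hf 0).add (hf 1)).add (hf 2)

lemma Mom.congr {f g : E3 → ℝ} {c d : ℝ} (hf : Mom f c) (h : ∀ v, g v = f v) (hc : d = c) :
    Mom g d := by
  obtain rfl : g = f := funext h
  subst hc
  exact hf

lemma normSq (v : E3) : ‖v‖ ^ 2 = v 0 ^ 2 + v 1 ^ 2 + v 2 ^ 2 := by
  rw [EuclideanSpace.real_norm_sq_eq, Fin.sum_univ_three]

lemma mono (a b c : ℕ) :
    Mom (fun v => v 0 ^ a * v 1 ^ b * v 2 ^ c) (gMom a * gMom b * gMom c) := by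
  have hp := EuclideanSpace.volume_preserving_symm_measurableEquiv_toLp (Fin 3)
  let F : Fin 3 → ℝ → ℝ := fun i y => y ^ (![a, b, c] i) * Real.exp (-y ^ 2 / 2)
  have hF : ∀ v : E3, v 0 ^ a * v 1 ^ b * v 2 ^ c * Real.exp (-‖v‖ ^ 2 / 2)
      = (fun w : Fin 3 → ℝ => ∏ i, F i (w i)) ((MeasurableEquiv.toLp 2 (Fin 3 → ℝ)).symm v) := by
    intro v
    have : -‖v‖ ^ 2 / 2 = -v 0 ^ 2 / 2 + -v 1 ^ 2 / 2 + -v 2 ^ 2 / 2 := by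
      rw [normSq]; ring
    rw [this, Real.exp_add, Real.exp_add]
    simp [F, Fin.prod_univ_three]
    ring
  unfold Mom
  simp only [hF]
  constructor
  · refine (hp.integrable_comp_emb (g := fun w : Fin 3 → ℝ => ∏ i, F i (w i)) (MeasurableEquiv.measurableEmbedding _)).2 ?_
    exact Integrable.fintype_prod (f := F) (μ := fun _ => volume) (fun i => gMom_integrable _)
  · rw [hp.integral_comp (MeasurableEquiv.measurableEmbedding _)
      (fun w : Fin 3 → ℝ => ∏ i, F i (w i)), integral_fintype_prod_volume_eq_prod]
    simp [F, Fin.prod_univ_three, gMom]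

lemma g2 : gMom 2 = gMom 0 := by simpa using gMom_add_two 0
lemma g3 : gMom 3 = 0 := by simpa [gMom_one] using gMom_add_two 1
lemma g4 : gMom 4 = 3 * gMom 0 := by
  have := gMom_add_two 2
  rw [g2] at this
  norm_num at this
  exact this
lemma g5 : gMom 5 = 0 := by simpa [g3] using gMom_add_two 3

/-- The mass of the Gaussian. -/
def gK : ℝ := gMom 0 ^ 3

lemma mom_one (i : Fin 3) : Mom (fun v => v i) 0 := by
  fin_cases i
  · refine (mono 1 0 0).congr (fun v => by simp) (by simp [gMom_one])
  · refine (mono 0 1 0).congr (fun v => by simp) (by simp [gMom_one])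
  · refine (mono 0 0 1).congr (fun v => by simp) (by simp [gMom_one])

/-- Kronecker exponent. -/
def dl (i l : Fin 3) : ℕ := if i = l then 1 else 0

lemma coord_pow (v : E3) (i : Fin 3) :
    v i = v 0 ^ dl i 0 * v 1 ^ dl i 1 * v 2 ^ dl i 2 := by
  fin_cases i <;> simp [dl]

lemma mom_three (i j k : Fin 3) : Mom (fun v => v i * v j * v k) 0 := by
  refine (mono (dl i 0 + dl j 0 + dl k 0) (dl i 1 + dl j 1 + dl k 1)
    (dl i 2 + dl j 2 + dl k 2)).congr (fun v => ?_) ?_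
  · simp only [pow_add]
    rw [coord_pow v i, coord_pow v j, coord_pow v k]
    ring
  · fin_cases i <;> fin_cases j <;> fin_cases k <;> simp [dl, gMom_one, g3]

lemma mom_two (i j : Fin 3) : Mom (fun v => v i * v j) (if i = j then gK else 0) := by
  refine (mono (dl i 0 + dl j 0) (dl i 1 + dl j 1) (dl i 2 + dl j 2)).congr (fun v => ?_) ?_
  · simp only [pow_add]
    rw [coord_pow v i, coord_pow v j]
    ring
  · fin_cases i <;> fin_cases j <;> simp [dl, gMom_one, g2, gK] <;> ring

lemma mom_four_aux (i j k : Fin 3) : Mom (fun v => v i * v j * v k ^ 2)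
    (if i = j then (if i = k then 3 * gK else gK) else 0) := by
  refine (mono (dl i 0 + dl j 0 + dl k 0 * 2) (dl i 1 + dl j 1 + dl k 1 * 2)
    (dl i 2 + dl j 2 + dl k 2 * 2)).congr (fun v => ?_) ?_
  · simp only [pow_add, pow_mul]
    rw [coord_pow v i, coord_pow v j, coord_pow v k]
    ring
  · fin_cases i <;> fin_cases j <;> fin_cases k <;>
      simp [dl, gMom_one, g2, g3, g4, gK] <;> ring

lemma mom_four (i j : Fin 3) :
    Mom (fun v => v i * v j * ‖v‖ ^ 2) (if i = j then 5 * gK else 0) := by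
  refine (((mom_four_aux i j 0).add (mom_four_aux i j 1)).add (mom_four_aux i j 2)).congr
    (fun v => by rw [normSq]; ring) ?_
  fin_cases i <;> fin_cases j <;> simp <;> ring

lemma mom_five_aux (i j k : Fin 3) : Mom (fun v => v i * v j ^ 2 * v k ^ 2) 0 := by
  refine (mono (dl i 0 + dl j 0 * 2 + dl k 0 * 2) (dl i 1 + dl j 1 * 2 + dl k 1 * 2)
    (dl i 2 + dl j 2 * 2 + dl k 2 * 2)).congr (fun v => ?_) ?_
  · simp only [pow_add, pow_mul]
    rw [coord_pow v i, coord_pow v j, coord_pow v k]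
    ring
  · fin_cases i <;> fin_cases j <;> fin_cases k <;> simp [dl, gMom_one, g3, g5]

lemma mom_three' (i : Fin 3) : Mom (fun v => v i * ‖v‖ ^ 2) 0 := by
  refine (((mom_three i 0 0).add (mom_three i 1 1)).add (mom_three i 2 2)).congr
    (fun v => by rw [normSq]; ring) (by simp)

lemma mom_five (i : Fin 3) : Mom (fun v => v i * ‖v‖ ^ 4) 0 := by
  refine (Mom.sum fun j => Mom.sum fun k => mom_five_aux i j k).congr (fun v => ?_) (by simp)
  rw [show ‖v‖ ^ 4 = (‖v‖ ^ 2) ^ 2 by ring, normSq]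
  simp only [Fin.sum_univ_three]
  ring

lemma hilbert_fderiv_eq (ρ θ : E3 → ℝ) (u : E3 → E3) (x : E3)
    (hρ : DifferentiableAt ℝ ρ x) (hθ : DifferentiableAt ℝ θ x)
    (hu : DifferentiableAt ℝ u x)
    (hB : fderiv ℝ (fun y => ρ y + θ y) x = 0) (v : E3) :
    fderiv ℝ (fun y => hilbertFirst ρ θ u y v) x v =
      ((∑ i, ∑ j, fderiv ℝ u x (EuclideanSpace.single i 1) j * (v i * v j)) +
        ∑ i, fderiv ℝ θ x (EuclideanSpace.single i 1) * (v i * (‖v‖ ^ 2 - 5) / 2)) *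
        Real.sqrt (globalMaxwellian v) := by
  have hv : v = ∑ i, v i • EuclideanSpace.single i (1 : ℝ) := by
    ext j
    fin_cases j <;> simp [Fin.sum_univ_three]
  have h1 : HasFDerivAt (fun y => hilbertFirst ρ θ u y v) _ x :=
    ((hρ.hasFDerivAt.add (hu.hasFDerivAt.inner ℝ (hasFDerivAt_const v x))).add
      ((hθ.hasFDerivAt.mul_const (‖v‖ ^ 2 - 3)).mul_const (2⁻¹ : ℝ))).mul_const
      (Real.sqrt (globalMaxwellian v))
  have hB' : fderiv ℝ ρ x v = - fderiv ℝ θ x v := by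
    have h2 := (hρ.hasFDerivAt.add hθ.hasFDerivAt).fderiv
    have h3 := hB.symm.trans h2
    have := congrArg (fun L => L v) h3
    simp at this
    linarith
  have ht : ∑ i, fderiv ℝ θ x (EuclideanSpace.single i 1) * (v i * (‖v‖ ^ 2 - 5) / 2)
      = fderiv ℝ θ x v * ((‖v‖ ^ 2 - 5) / 2) := by
    have : fderiv ℝ θ x v = ∑ i, v i • fderiv ℝ θ x (EuclideanSpace.single i 1) := by
      conv_lhs => rw [hv]
      simp only [map_sum, map_smul]
    rw [this, Finset.sum_mul]
    refine Finset.sum_congr rfl fun i _ => ?_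
    rw [smul_eq_mul]
    ring
  have hA : ∑ i, ∑ j, fderiv ℝ u x (EuclideanSpace.single i 1) j * (v i * v j)
      = ⟪fderiv ℝ u x v, v⟫ := by
    have : fderiv ℝ u x v = ∑ i, v i • fderiv ℝ u x (EuclideanSpace.single i 1) := by
      conv_lhs => rw [hv]
      simp only [map_sum, map_smul]
    rw [this, sum_inner]
    refine Finset.sum_congr rfl fun i _ => ?_
    rw [real_inner_smul_left, PiLp.inner_apply, Finset.mul_sum]
    refine Finset.sum_congr rfl fun j _ => ?_
    simp
    ring
  rw [h1.fderiv, ht, hA]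
  simp [fderivInnerCLM_apply, hB']
  ring

lemma sqrt_sq_maxwellian (v : E3) :
    Real.sqrt (globalMaxwellian v) * Real.sqrt (globalMaxwellian v)
      = (2 * Real.pi) ^ (-(3 : ℝ) / 2) * Real.exp (-‖v‖ ^ 2 / 2) := by
  rw [Real.mul_self_sqrt]
  · rfl
  · unfold globalMaxwellian
    positivity

lemma finish {f : E3 → ℝ} {g : E3 → ℝ} (hf : Mom f 0)
    (h : ∀ v, g v = f v * (Real.sqrt (globalMaxwellian v) * Real.sqrt (globalMaxwellian v))) :
    ∫ v : E3, g v = 0 := by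
  have : ∀ v, g v = (2 * Real.pi) ^ (-(3 : ℝ) / 2) * (f v * Real.exp (-‖v‖ ^ 2 / 2)) := by
    intro v
    rw [h, sqrt_sq_maxwellian]
    ring
  simp only [this]
  rw [integral_const_mul, hf.2, mul_zero]

/-- Under incompressibility `∇·u(x) = 0` and the Boussinesq relation `∇(ρ+θ)(x) = 0`, the
hydrodynamic projection of `v·∇ₓ f₁` vanishes: its moments against `φ(v)√μ(v)` vanish for
every `φ ∈ {1, v₁, v₂, v₃, |v|²/2}`. -/
theorem hydrodynamic_projection_vanishes
    (ρ θ : EuclideanSpace ℝ (Fin 3) → ℝ)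
    (u : EuclideanSpace ℝ (Fin 3) → EuclideanSpace ℝ (Fin 3))
    (U : Set (EuclideanSpace ℝ (Fin 3))) (hU : IsOpen U)
    (x : EuclideanSpace ℝ (Fin 3)) (hx : x ∈ U)
    (hρ : DifferentiableAt ℝ ρ x) (hθ : DifferentiableAt ℝ θ x)
    (hu : DifferentiableAt ℝ u x)
    (hdiv : ∑ i : Fin 3, fderiv ℝ u x (EuclideanSpace.single i 1) i = 0)
    (hBoussinesq : fderiv ℝ (fun y => ρ y + θ y) x = 0) :
    ((∫ v : EuclideanSpace ℝ (Fin 3),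
        fderiv ℝ (fun y => hilbertFirst ρ θ u y v) x v * Real.sqrt (globalMaxwellian v)) = 0) ∧
    (∀ i : Fin 3,
      (∫ v : EuclideanSpace ℝ (Fin 3),
          fderiv ℝ (fun y => hilbertFirst ρ θ u y v) x v *
            (v i * Real.sqrt (globalMaxwellian v))) = 0) ∧
    ((∫ v : EuclideanSpace ℝ (Fin 3),
        fderiv ℝ (fun y => hilbertFirst ρ θ u y v) x v *
          (‖v‖ ^ 2 / 2 * Real.sqrt (globalMaxwellian v))) = 0) := by
  have hd := hilbert_fderiv_eq ρ θ u x hρ hθ hu hBoussinesq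
  have hdiv' : ∀ c : ℝ, ∑ i : Fin 3, fderiv ℝ u x (EuclideanSpace.single i 1) i * c = 0 := by
    intro c
    rw [← Finset.sum_mul, hdiv, zero_mul]
  refine ⟨?_, fun k => ?_, ?_⟩
  · have h1 := Mom.sum fun i => Mom.sum fun j =>
      (mom_two i j).smul (fderiv ℝ u x (EuclideanSpace.single i 1) j)
    have h2 := Mom.sum fun i => (((mom_three' i).smul (1 / 2)).add ((mom_one i).smul (-5 / 2))).smul
      (fderiv ℝ θ x (EuclideanSpace.single i 1))
    refine finish ((h1.add h2).congr (fun v => rfl) (by simp [hdiv'])) fun v => ?_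
    rw [hd]
    simp only [Fin.sum_univ_three]
    ring
  · have h1 := Mom.sum fun i => Mom.sum fun j =>
      (mom_three i j k).smul (fderiv ℝ u x (EuclideanSpace.single i 1) j)
    have h2 := Mom.sum fun i =>
      (((mom_four i k).smul (1 / 2)).add ((mom_two i k).smul (-5 / 2))).smul
      (fderiv ℝ θ x (EuclideanSpace.single i 1))
    have hz : ∀ i : Fin 3, 1 / 2 * (if i = k then 5 * gK else 0) +
        -5 / 2 * (if i = k then gK else 0) = 0 := by
      intro i
      split_ifs <;> ring
    refine finish ((h1.add h2).congr (fun v => rfl) (by simp only [hz]; simp)) fun v => ?_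
    rw [hd]
    simp only [Fin.sum_univ_three]
    ring
  · have h1 := Mom.sum fun i => Mom.sum fun j =>
      ((mom_four i j).smul (1 / 2)).smul (fderiv ℝ u x (EuclideanSpace.single i 1) j)
    have h2 := Mom.sum fun i =>
      (((mom_five i).smul (1 / 4)).add ((mom_three' i).smul (-5 / 4))).smul
      (fderiv ℝ θ x (EuclideanSpace.single i 1))
    refine finish ((h1.add h2).congr (fun v => rfl) (by simp [hdiv'])) fun v => ?_
    rw [hd]
    simp only [Fin.sum_univ_three]
    ring
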